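/- Let ω and ν be radial weights. Then P_ω : L^∞_ν̂ → B^∞_ν̂ is bounded if and only if sup_{z∈𝔻} (1−|z|) ν̂(z) ∫_𝔻 |(B^ω_ζ)'(z)| (ω(ζ)/ν̂(ζ)) dA(ζ) < ∞, where (B^ω_ζ)'(z) = Σ_{n=1}^∞ n z^{n−1} conj(ζ)^n / (2 ω_{2n+1}) denotes the derivative of the kernel with respect to z. -/

import Mathlib

open MeasureTheory Set Complex
open scoped ENNReal

noncomputable section

/-- The open unit disc in the complex plane. -/
def unitDisc : Set ℂ := Metric.ball 0 1

/-- Tail integral `ω̂(r) = ∫_r^1 ω(s) ds`. -/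
def tl (ω : ℝ → ℝ) (r : ℝ) : ℝ := ∫ s in r..1, ω s

/-- Moment `ω_x = ∫_0^1 s^x ω(s) ds` (real power in the exponent). -/
def mom (ω : ℝ → ℝ) (x : ℝ) : ℝ := ∫ s in (0:ℝ)..1, s ^ x * ω s

/-- `ω` is a radial weight: nonnegative and integrable on `[0,1)`, with positive
tail integrals. -/
def IsRadialWeight (ω : ℝ → ℝ) : Prop :=
  (∀ s ∈ Ico (0:ℝ) 1, 0 ≤ ω s) ∧ IntegrableOn ω (Ico (0:ℝ) 1) ∧
    ∀ r ∈ Ico (0:ℝ) 1, 0 < tl ω r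

/-- The upper doubling class `D̂`: `sup_{0≤r<1} ω̂(r)/ω̂((1+r)/2) < ∞`. -/
def Dhat (ω : ℝ → ℝ) : Prop :=
  ∃ C : ℝ, ∀ r ∈ Ico (0:ℝ) 1, tl ω r ≤ C * tl ω ((1 + r) / 2)

/-- The class `Ď`: there are `K > 1`, `C > 1` with `ω̂(r) ≥ C ω̂(1 - (1-r)/K)`. -/
def Dcheck (ω : ℝ → ℝ) : Prop :=
  ∃ K C : ℝ, 1 < K ∧ 1 < C ∧ ∀ r ∈ Ico (0:ℝ) 1, C * tl ω (1 - (1 - r) / K) ≤ tl ω r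

/-- The class `D = D̂ ∩ Ď`. -/
def DD (ω : ℝ → ℝ) : Prop := Dhat ω ∧ Dcheck ω

/-- The Bergman reproducing kernel `B^ω_z(ζ) = Σ_n (conj z · ζ)^n / (2 ω_{2n+1})`. -/
def bKer (ω : ℝ → ℝ) (z ζ : ℂ) : ℂ :=
  ∑' n : ℕ, (starRingEnd ℂ z * ζ) ^ n / ((2 * mom ω (2 * (n : ℝ) + 1) : ℝ) : ℂ)

/-- The integrand of the Bergman projection. -/
def bInt (ω : ℝ → ℝ) (f : ℂ → ℂ) (z ζ : ℂ) : ℂ :=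
  f ζ * starRingEnd ℂ (bKer ω z ζ) * ((ω ‖ζ‖ : ℝ) : ℂ)

/-- The Bergman projection `P_ω f(z) = ∫_𝔻 f(ζ) conj(B^ω_z(ζ)) ω(ζ) dA(ζ)`,
where `dA` is normalized area measure `dx dy / π`. -/
def bProj (ω : ℝ → ℝ) (f : ℂ → ℂ) (z : ℂ) : ℂ :=
  (Real.pi : ℂ)⁻¹ * ∫ ζ in unitDisc, bInt ω f z ζ

/-- The weighted sup-norm `ess sup_{z ∈ 𝔻} |f(z)| v(|z|)`, valued in `ℝ≥0∞`. -/
def wSup (v : ℝ → ℝ) (f : ℂ → ℂ) : ℝ≥0∞ :=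
  essSup (fun z => ENNReal.ofReal (‖f z‖ * v ‖z‖)) (volume.restrict unitDisc)

/-- `P_ω : L^∞_v → H^∞_v` is bounded: there is `C > 0` so that for every
`f ∈ L^∞_v` the defining integral converges absolutely at every point of `𝔻`,
`P_ω f` is analytic on `𝔻`, and `‖P_ω f‖_{L^∞_v} ≤ C ‖f‖_{L^∞_v}`. -/
def ProjBddH (ω v : ℝ → ℝ) : Prop :=
  ∃ C : ℝ, 0 < C ∧ ∀ f : ℂ → ℂ,
    AEStronglyMeasurable f (volume.restrict unitDisc) → wSup v f < ⊤ →
    (∀ z ∈ unitDisc, IntegrableOn (bInt ω f z) unitDisc) ∧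
    DifferentiableOn ℂ (bProj ω f) unitDisc ∧
    wSup v (bProj ω f) ≤ ENNReal.ofReal C * wSup v f

/-- `P_ω : L^∞_v → B^∞_v` is bounded: there is `C > 0` so that for every
`f ∈ L^∞_v` the defining integral converges absolutely at every point of `𝔻`,
`P_ω f` is analytic on `𝔻`, and `‖P_ω f‖_{B^∞_v} ≤ C ‖f‖_{L^∞_v}`. -/
def ProjBddB (ω v : ℝ → ℝ) : Prop :=
  ∃ C : ℝ, 0 < C ∧ ∀ f : ℂ → ℂ,
    AEStronglyMeasurable f (volume.restrict unitDisc) → wSup v f < ⊤ →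
    (∀ z ∈ unitDisc, IntegrableOn (bInt ω f z) unitDisc) ∧
    DifferentiableOn ℂ (bProj ω f) unitDisc ∧
    ∀ z ∈ unitDisc,
      ENNReal.ofReal ((1 - ‖z‖) * v ‖z‖ * ‖deriv (bProj ω f) z‖) ≤
        ENNReal.ofReal C * wSup v f

/-- The moment condition `sup_{x ≥ 0} (ν_x / ω_{2x}) (ω/ν̂)_x < ∞`. -/
def MomCond (ω ν : ℝ → ℝ) : Prop :=
  ∃ C : ℝ, ∀ x : ℝ, 0 ≤ x →
    mom ν x / mom ω (2 * x) * mom (fun s => ω s / tl ν s) x ≤ C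

/-- The tail condition `sup_{0 ≤ r < 1} (ν̂(r)/ω̂(r)) ∫_r^1 ω(s)/ν̂(s) ds < ∞`. -/
def TailCond (ω ν : ℝ → ℝ) : Prop :=
  ∃ C : ℝ, ∀ r ∈ Ico (0:ℝ) 1, tl ν r / tl ω r * tl (fun s => ω s / tl ν s) r ≤ C

/-- Derivative in `z` of the Bergman kernel `ζ ↦ B^ω_ζ(z)`:
`(B^ω_ζ)'(z) = Σ_{n≥1} n z^{n-1} conj(ζ)^n / (2 ω_{2n+1})`. -/
def bKerD (ω : ℝ → ℝ) (ζ z : ℂ) : ℂ :=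
  ∑' n : ℕ,
    (n : ℂ) * z ^ (n - 1) * (starRingEnd ℂ ζ) ^ n /
      ((2 * mom ω (2 * (n : ℝ) + 1) : ℝ) : ℂ)

/-! Writing `k_ω(w) = ∑ wⁿ / (2 ω_{2n+1})`, we have `conj (B^ω_z(ζ)) = k_ω(z ζ̄)`, and `k_ω` is
holomorphic in the disc because the moments `ω_x` decay more slowly than any geometric sequence.
Each of the two conditions, read at `z = 0`, forces `ω/ν̂` to be integrable over the disc. Once this
is known, `P_ω f` may be differentiated under the integral sign for every `f` in `L^∞_ν̂`, so that
`(P_ω f)'(z) = ∫ f(ζ) (B^ω_ζ)'(z) ω(ζ) dA(ζ)`. By `L^1`-`L^∞` duality the largest possible value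
of `|(P_ω f)'(z)|` on the unit ball of `L^∞_ν̂` is `∫ |(B^ω_ζ)'(z)| ω(ζ)/ν̂(ζ) dA(ζ)`; it is
attained at `f(ζ) = conj ((B^ω_ζ)'(z)) / (|(B^ω_ζ)'(z)| ν̂(ζ))`. -/

open scoped ComplexConjugate

lemma complex_enorm_ofReal {r : ℝ} (hr : 0 ≤ r) : ‖(r : ℂ)‖ₑ = ENNReal.ofReal r := by
  rw [← ofReal_norm, Complex.norm_of_nonneg hr]

lemma hasDerivAt_tsum_mul_pow {a : ℕ → ℂ} {r : ℝ} (ha : Summable fun n ↦ ‖a n‖ * r ^ n) {w : ℂ}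
    (hw : ‖w‖ < r) :
    HasDerivAt (fun w ↦ ∑' n, a n * w ^ n) (∑' n : ℕ, a n * (n * w ^ (n - 1))) w := by
  have hw' : w ∈ Metric.ball (0 : ℂ) r := mem_ball_zero_iff.2 hw
  have hdiff (n : ℕ) : DifferentiableOn ℂ (fun w ↦ a n * w ^ n) (Metric.ball 0 r) := by fun_prop
  have hbound (n : ℕ) (x : ℂ) (hx : x ∈ Metric.ball (0 : ℂ) r) :
      ‖a n * x ^ n‖ ≤ ‖a n‖ * r ^ n := by
    rw [norm_mul, norm_pow]
    gcongr
    exact (mem_ball_zero_iff.1 hx).le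
  have hderiv := hasSum_deriv_of_summable_norm ha hdiff Metric.isOpen_ball hbound hw'
  have hdiffTsum := differentiableOn_tsum_of_summable_norm ha hdiff Metric.isOpen_ball hbound
  have hsum := hdiffTsum.hasDerivAt (Metric.isOpen_ball.mem_nhds hw')
  rw [← hderiv.tsum_eq] at hsum
  simpa using hsum

lemma isOpen_unitDisc : IsOpen unitDisc := Metric.isOpen_ball

lemma measurableSet_unitDisc : MeasurableSet unitDisc := isOpen_unitDisc.measurableSet

lemma mem_unitDisc {z : ℂ} : z ∈ unitDisc ↔ ‖z‖ < 1 := mem_ball_zero_iff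

lemma zero_mem_unitDisc : (0 : ℂ) ∈ unitDisc := Metric.mem_ball_self one_pos

lemma norm_mem_Ico_of_mem_unitDisc {z : ℂ} (hz : z ∈ unitDisc) : ‖z‖ ∈ Ico (0 : ℝ) 1 :=
  ⟨norm_nonneg z, mem_unitDisc.1 hz⟩

lemma integrableOn_comp_norm_unitDisc {φ : ℝ → ℝ} (hφ : IntegrableOn φ (Ico 0 1)) :
    IntegrableOn (fun ζ : ℂ ↦ φ ‖ζ‖) unitDisc := by
  rw [unitDisc, integrableOn_fun_norm_addHaar]
  exact (((integrableOn_Icc_iff_integrableOn_Ico).2 hφ).continuousOn_mul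
    (continuous_pow _).continuousOn isCompact_Icc).mono_set Ioo_subset_Icc_self

lemma integrableOn_of_integrableOn_norm_mul {E : Type*} [NormedAddCommGroup E] [MeasurableSpace E]
    [OpensMeasurableSpace E] {μ : Measure E} {s : Set E} {g : E → ℝ} {r : ℝ}
    (hs : MeasurableSet s) (hr : 0 < r) (hball : IntegrableOn g (Metric.closedBall 0 r) μ)
    (hmul : IntegrableOn (fun x ↦ ‖x‖ * g x) s μ) : IntegrableOn g s μ := by
  have hmeas : MeasurableSet (s \ Metric.closedBall 0 r) :=
    hs.diff Metric.isClosed_closedBall.measurableSet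
  have hlt (x : E) (hx : x ∈ s \ Metric.closedBall 0 r) : r < ‖x‖ := by simpa using hx.2
  have hquot : IntegrableOn (fun x ↦ ‖x‖⁻¹ * (‖x‖ * g x)) (s \ Metric.closedBall 0 r) μ := by
    refine (hmul.mono_set sdiff_subset).bdd_mul (c := r⁻¹)
      measurable_norm.inv.aestronglyMeasurable (ae_restrict_of_forall_mem hmeas fun x hx ↦ ?_)
    rw [norm_inv, norm_norm]
    exact inv_anti₀ hr (hlt x hx).le
  have houter : IntegrableOn g (s \ Metric.closedBall 0 r) μ :=
    hquot.congr_fun (fun x hx ↦ inv_mul_cancel_left₀ (hr.trans (hlt x hx)).ne' _) hmeas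
  exact (hball.union houter).mono_set (by simp)

section HolomorphicKernel

variable {k : ℂ → ℂ} {z ζ : ℂ}

lemma norm_mul_conj_le (hζ : ζ ∈ unitDisc) : ‖z * conj ζ‖ ≤ ‖z‖ := by
  rw [norm_mul, norm_conj]
  exact mul_le_of_le_one_right (norm_nonneg z) (mem_unitDisc.1 hζ).le

lemma mul_conj_mem_unitDisc (hz : z ∈ unitDisc) (hζ : ζ ∈ unitDisc) : z * conj ζ ∈ unitDisc :=
  mem_unitDisc.2 ((norm_mul_conj_le hζ).trans_lt (mem_unitDisc.1 hz))

lemma continuousOn_comp_mul_conj (hk : ContinuousOn k unitDisc) (hz : z ∈ unitDisc) :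
    ContinuousOn (fun ζ ↦ k (z * conj ζ)) unitDisc :=
  hk.comp (by fun_prop) fun _ hζ ↦ mul_conj_mem_unitDisc hz hζ

lemma exists_norm_comp_mul_conj_le (hk : ContinuousOn k unitDisc) {r : ℝ} (hr : r < 1) :
    ∃ M, ∀ z ζ : ℂ, ‖z‖ ≤ r → ζ ∈ unitDisc → ‖k (z * conj ζ)‖ ≤ M := by
  obtain ⟨M, hM⟩ := (isCompact_closedBall (0 : ℂ) r).exists_bound_of_continuousOn
    (hk.mono (Metric.closedBall_subset_ball hr))
  exact ⟨M, fun z ζ hz hζ ↦ hM _ (mem_closedBall_zero_iff.2 ((norm_mul_conj_le hζ).trans hz))⟩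

lemma hasDerivAt_comp_mul_conj (hk : DifferentiableOn ℂ k unitDisc) (hz : z ∈ unitDisc)
    (hζ : ζ ∈ unitDisc) :
    HasDerivAt (fun z ↦ k (z * conj ζ)) (deriv k (z * conj ζ) * conj ζ) z :=
  (hk.hasDerivAt (isOpen_unitDisc.mem_nhds (mul_conj_mem_unitDisc hz hζ))).comp z
    (hasDerivAt_mul_const (conj ζ))

variable {μ : Measure ℂ} {h : ℂ → ℂ}

lemma integrableOn_comp_mul_conj_mul (hk : ContinuousOn k unitDisc)
    (hh : IntegrableOn h unitDisc μ) (hz : z ∈ unitDisc) :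
    IntegrableOn (fun ζ ↦ k (z * conj ζ) * h ζ) unitDisc μ := by
  obtain ⟨M, hM⟩ := exists_norm_comp_mul_conj_le hk (mem_unitDisc.1 hz)
  exact hh.bdd_mul
    ((continuousOn_comp_mul_conj hk hz).aestronglyMeasurable measurableSet_unitDisc)
    (ae_restrict_of_forall_mem measurableSet_unitDisc fun ζ hζ ↦ hM z ζ le_rfl hζ)

lemma integrableOn_conj_mul (hh : IntegrableOn h unitDisc μ) :
    IntegrableOn (fun ζ ↦ conj ζ * h ζ) unitDisc μ :=
  hh.bdd_mul (c := 1) continuous_conj.aestronglyMeasurable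
    (ae_restrict_of_forall_mem measurableSet_unitDisc fun ζ hζ ↦ by
      simpa using (mem_unitDisc.1 hζ).le)

lemma hasDerivAt_integral_comp_mul_conj (hk : DifferentiableOn ℂ k unitDisc)
    (hh : IntegrableOn h unitDisc μ) (hz : z ∈ unitDisc) :
    HasDerivAt (fun z ↦ ∫ ζ in unitDisc, k (z * conj ζ) * h ζ ∂μ)
      (∫ ζ in unitDisc, deriv k (z * conj ζ) * (conj ζ * h ζ) ∂μ) z := by
  have hk' : ContinuousOn (deriv k) unitDisc := (hk.deriv isOpen_unitDisc).continuousOn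
  have hh' := integrableOn_conj_mul hh
  obtain ⟨r, hzr, hr⟩ := exists_between (mem_unitDisc.1 hz)
  obtain ⟨M, hM⟩ := exists_norm_comp_mul_conj_le hk' hr
  refine (hasDerivAt_integral_of_dominated_loc_of_deriv_le (μ := μ.restrict unitDisc)
    (F := fun z ζ ↦ k (z * conj ζ) * h ζ)
    (F' := fun z ζ ↦ deriv k (z * conj ζ) * (conj ζ * h ζ)) (s := Metric.ball 0 r)
    (bound := fun ζ ↦ M * ‖conj ζ * h ζ‖) (Metric.isOpen_ball.mem_nhds (mem_ball_zero_iff.2 hzr))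
    ?_ (integrableOn_comp_mul_conj_mul hk.continuousOn hh hz)
    (integrableOn_comp_mul_conj_mul hk' hh' hz).aestronglyMeasurable ?_ (hh'.norm.const_mul M)
    ?_).2
  · filter_upwards [isOpen_unitDisc.mem_nhds hz] with x hx
    exact (integrableOn_comp_mul_conj_mul hk.continuousOn hh hx).aestronglyMeasurable
  · refine ae_restrict_of_forall_mem measurableSet_unitDisc fun ζ hζ x hx ↦ ?_
    rw [norm_mul]
    gcongr
    exact hM x ζ (mem_ball_zero_iff.1 hx).le hζ
  · refine ae_restrict_of_forall_mem measurableSet_unitDisc fun ζ hζ x hx ↦ ?_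
    have hx' : x ∈ unitDisc := Metric.ball_subset_ball hr.le hx
    simpa only [mul_assoc] using (hasDerivAt_comp_mul_conj hk hx' hζ).mul_const (h ζ)

end HolomorphicKernel

namespace IsRadialWeight

variable {ω : ℝ → ℝ}

lemma nonneg_norm (hω : IsRadialWeight ω) {z : ℂ} (hz : z ∈ unitDisc) : 0 ≤ ω ‖z‖ :=
  hω.1 _ (norm_mem_Ico_of_mem_unitDisc hz)

lemma integrableOn_Icc (hω : IsRadialWeight ω) : IntegrableOn ω (Icc 0 1) :=
  (integrableOn_Icc_iff_integrableOn_Ico).2 hω.2.1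

lemma continuousOn_tl (hω : IsRadialWeight ω) : ContinuousOn (tl ω) (Icc 0 1) := by
  have hprim := intervalIntegral.continuousOn_primitive_interval_left (a := 0) (b := 1) (f := ω)
    (μ := volume) (by simpa only [uIcc_of_le zero_le_one] using hω.integrableOn_Icc)
  rwa [uIcc_of_le zero_le_one] at hprim

lemma rpow_mul_tl_le_mom (hω : IsRadialWeight ω) {s x : ℝ} (hs : s ∈ Icc (0 : ℝ) 1)
    (hx : 0 ≤ x) : s ^ x * tl ω s ≤ mom ω x := by
  have hint : IntegrableOn (fun t ↦ t ^ x * ω t) (Icc 0 1) :=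
    hω.integrableOn_Icc.continuousOn_mul (Real.continuous_rpow_const hx).continuousOn isCompact_Icc
  have hsub : Ioo s 1 ⊆ Ioo 0 1 := Ioo_subset_Ioo_left hs.1
  have hsub' : Ioo s 1 ⊆ Icc 0 1 := hsub.trans Ioo_subset_Icc_self
  have hnonneg (t : ℝ) (ht : t ∈ Ioo (0 : ℝ) 1) : 0 ≤ ω t := hω.1 t ⟨ht.1.le, ht.2⟩
  calc s ^ x * tl ω s = ∫ t in Ioo s 1, s ^ x * ω t := by
        rw [tl, intervalIntegral.integral_of_le hs.2, integral_Ioc_eq_integral_Ioo,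
          integral_const_mul]
    _ ≤ ∫ t in Ioo s 1, t ^ x * ω t := by
        refine setIntegral_mono_on ((hω.integrableOn_Icc.mono_set hsub').const_mul _)
          (hint.mono_set hsub') measurableSet_Ioo fun t ht ↦ ?_
        exact mul_le_mul_of_nonneg_right (Real.rpow_le_rpow hs.1 ht.1.le hx)
          (hnonneg t (hsub ht))
    _ ≤ ∫ t in Ioo 0 1, t ^ x * ω t := by
        refine setIntegral_mono_set (hint.mono_set Ioo_subset_Icc_self) ?_ hsub.eventuallyLE
        exact ae_restrict_of_forall_mem measurableSet_Ioo fun t ht ↦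
          mul_nonneg (Real.rpow_nonneg ht.1.le x) (hnonneg t ht)
    _ = mom ω x := by
        rw [mom, intervalIntegral.integral_of_le zero_le_one, integral_Ioc_eq_integral_Ioo]

lemma mom_pos (hω : IsRadialWeight ω) {x : ℝ} (hx : 0 ≤ x) : 0 < mom ω x :=
  (mul_pos (by positivity) (hω.2.2 (1 / 2) (by norm_num))).trans_le
    (hω.rpow_mul_tl_le_mom (s := 1 / 2) (by norm_num) hx)

lemma summable_pow_div_mom (hω : IsRadialWeight ω) {r : ℝ} (hr₀ : 0 ≤ r) (hr₁ : r < 1) :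
    Summable fun n : ℕ ↦ r ^ n / mom ω (2 * n + 1) := by
  obtain ⟨s, hrs, hs₁⟩ : ∃ s, √r < s ∧ s < 1 :=
    exists_between ((Real.sqrt_lt' one_pos).2 (by simpa using hr₁))
  have hs₀ : 0 < s := (Real.sqrt_nonneg r).trans_lt hrs
  have htl : 0 < tl ω s := hω.2.2 s ⟨hs₀.le, hs₁⟩
  have hgeom : Summable fun n : ℕ ↦ (r / s ^ 2) ^ n :=
    summable_geometric_of_lt_one (by positivity)
      ((div_lt_one (by positivity)).2 ((Real.sqrt_lt' hs₀).1 hrs))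
  refine (hgeom.mul_left (s * tl ω s)⁻¹).of_nonneg_of_le
    (fun n ↦ div_nonneg (by positivity) (hω.mom_pos (by positivity)).le) fun n ↦ ?_
  have hmom : s ^ (2 * n + 1) * tl ω s ≤ mom ω (2 * n + 1) := by
    simpa only [← Real.rpow_natCast, Nat.cast_add, Nat.cast_mul, Nat.cast_ofNat, Nat.cast_one]
      using hω.rpow_mul_tl_le_mom ⟨hs₀.le, hs₁.le⟩ (x := 2 * n + 1) (by positivity)
  calc r ^ n / mom ω (2 * n + 1) ≤ r ^ n / (s ^ (2 * n + 1) * tl ω s) := by gcongr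
    _ = (s * tl ω s)⁻¹ * (r / s ^ 2) ^ n := by
        rw [div_pow, ← pow_mul, pow_succ]
        field_simp

end IsRadialWeight

section Kernel

/-- The power series `k_ω(w) = ∑ wⁿ / (2 ω_{2n+1})`, through which the Bergman kernel of `ω`
depends on its two variables: `conj (B^ω_z(ζ)) = k_ω(z ζ̄)`. -/
def kernelSeries (ω : ℝ → ℝ) (w : ℂ) : ℂ :=
  ∑' n : ℕ, ((2 * mom ω (2 * n + 1) : ℝ) : ℂ)⁻¹ * w ^ n

variable {ω : ℝ → ℝ} {f : ℂ → ℂ} {z ζ : ℂ}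

lemma IsRadialWeight.hasDerivAt_kernelSeries (hω : IsRadialWeight ω) {w : ℂ}
    (hw : w ∈ unitDisc) :
    HasDerivAt (kernelSeries ω)
      (∑' n : ℕ, ((2 * mom ω (2 * n + 1) : ℝ) : ℂ)⁻¹ * (n * w ^ (n - 1))) w := by
  obtain ⟨r, hwr, hr⟩ := exists_between (mem_unitDisc.1 hw)
  refine hasDerivAt_tsum_mul_pow (r := r) ?_ hwr
  refine ((hω.summable_pow_div_mom ((norm_nonneg w).trans hwr.le) hr).mul_left 2⁻¹).congr
    fun n ↦ ?_
  have hmom : 0 < mom ω (2 * n + 1) := hω.mom_pos (by positivity)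
  rw [norm_inv, norm_real, Real.norm_of_nonneg (by positivity)]
  ring

lemma IsRadialWeight.differentiableOn_kernelSeries (hω : IsRadialWeight ω) :
    DifferentiableOn ℂ (kernelSeries ω) unitDisc :=
  fun _ hw ↦ (hω.hasDerivAt_kernelSeries hw).differentiableAt.differentiableWithinAt

lemma conj_bKer (ω : ℝ → ℝ) (z ζ : ℂ) : conj (bKer ω z ζ) = kernelSeries ω (z * conj ζ) := by
  rw [bKer, conj_tsum, kernelSeries]
  refine tsum_congr fun n ↦ ?_
  rw [map_div₀, conj_ofReal, map_pow, map_mul, conj_conj, div_eq_inv_mul]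

lemma IsRadialWeight.bKerD_eq (hω : IsRadialWeight ω) (hz : z ∈ unitDisc) (hζ : ζ ∈ unitDisc) :
    bKerD ω ζ z = deriv (kernelSeries ω) (z * conj ζ) * conj ζ := by
  rw [(hω.hasDerivAt_kernelSeries (mul_conj_mem_unitDisc hz hζ)).deriv, ← tsum_mul_right, bKerD]
  refine tsum_congr fun n ↦ ?_
  cases n with
  | zero => simp
  | succ n =>
    rw [Nat.add_sub_cancel, mul_pow, pow_succ]
    ring

lemma IsRadialWeight.continuousOn_bKerD (hω : IsRadialWeight ω) (hz : z ∈ unitDisc) :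
    ContinuousOn (fun ζ ↦ bKerD ω ζ z) unitDisc :=
  ((continuousOn_comp_mul_conj
    (hω.differentiableOn_kernelSeries.deriv isOpen_unitDisc).continuousOn hz).mul
    continuous_conj.continuousOn).congr fun _ hζ ↦ hω.bKerD_eq hz hζ

lemma IsRadialWeight.integrableOn_bKerD_mul (hω : IsRadialWeight ω) {h : ℂ → ℂ}
    (hh : IntegrableOn h unitDisc) (hz : z ∈ unitDisc) :
    IntegrableOn (fun ζ ↦ bKerD ω ζ z * h ζ) unitDisc :=
  (integrableOn_comp_mul_conj_mul
    (hω.differentiableOn_kernelSeries.deriv isOpen_unitDisc).continuousOn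
    (integrableOn_conj_mul hh) hz).congr_fun
    (fun ζ hζ ↦ by rw [hω.bKerD_eq hz hζ, mul_assoc]) measurableSet_unitDisc

lemma bKer_zero (ω : ℝ → ℝ) (ζ : ℂ) : bKer ω 0 ζ = ((2 * mom ω 1 : ℝ) : ℂ)⁻¹ := by
  rw [bKer, tsum_eq_single 0 fun n hn ↦ by simp [hn]]
  simp

lemma bKerD_zero (ω : ℝ → ℝ) (ζ : ℂ) : bKerD ω ζ 0 = conj ζ / ((2 * mom ω 3 : ℝ) : ℂ) := by
  rw [bKerD, tsum_eq_single 1]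
  · norm_num
  · rintro (_ | _ | n) hn
    · simp
    · exact absurd rfl hn
    · simp

lemma bInt_eq (ω : ℝ → ℝ) (f : ℂ → ℂ) (z : ℂ) :
    bInt ω f z = fun ζ ↦ kernelSeries ω (z * conj ζ) * (f ζ * ω ‖ζ‖) := by
  ext ζ
  rw [bInt, conj_bKer]
  ring

lemma IsRadialWeight.integrableOn_bInt (hω : IsRadialWeight ω)
    (hf : IntegrableOn (fun ζ ↦ f ζ * ω ‖ζ‖) unitDisc) (hz : z ∈ unitDisc) :
    IntegrableOn (bInt ω f z) unitDisc := by
  rw [bInt_eq]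
  exact integrableOn_comp_mul_conj_mul hω.differentiableOn_kernelSeries.continuousOn hf hz

lemma IsRadialWeight.hasDerivAt_bProj (hω : IsRadialWeight ω)
    (hf : IntegrableOn (fun ζ ↦ f ζ * ω ‖ζ‖) unitDisc) (hz : z ∈ unitDisc) :
    HasDerivAt (bProj ω f)
      ((Real.pi : ℂ)⁻¹ * ∫ ζ in unitDisc, bKerD ω ζ z * (f ζ * ω ‖ζ‖)) z := by
  have hint : ∫ ζ in unitDisc, bKerD ω ζ z * (f ζ * ω ‖ζ‖) =
      ∫ ζ in unitDisc, deriv (kernelSeries ω) (z * conj ζ) * (conj ζ * (f ζ * ω ‖ζ‖)) :=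
    setIntegral_congr_fun measurableSet_unitDisc fun ζ hζ ↦ by
      rw [hω.bKerD_eq hz hζ, mul_assoc]
  have hproj : bProj ω f = fun z ↦ (Real.pi : ℂ)⁻¹ *
      ∫ ζ in unitDisc, kernelSeries ω (z * conj ζ) * (f ζ * ω ‖ζ‖) := by
    ext z
    rw [bProj, bInt_eq]
  rw [hint, hproj]
  exact (hasDerivAt_integral_comp_mul_conj hω.differentiableOn_kernelSeries hf hz).const_mul _

lemma IsRadialWeight.ofReal_pi_mul_enorm_deriv_bProj (hω : IsRadialWeight ω)
    (hf : IntegrableOn (fun ζ ↦ f ζ * ω ‖ζ‖) unitDisc) (hz : z ∈ unitDisc) :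
    ENNReal.ofReal Real.pi * ‖deriv (bProj ω f) z‖ₑ =
      ‖∫ ζ in unitDisc, bKerD ω ζ z * (f ζ * ω ‖ζ‖)‖ₑ := by
  have hpi : (Real.pi : ℂ) ≠ 0 := ofReal_ne_zero.2 Real.pi_ne_zero
  rw [← complex_enorm_ofReal Real.pi_pos.le, ← enorm_mul, (hω.hasDerivAt_bProj hf hz).deriv,
    mul_inv_cancel_left₀ hpi]

end Kernel

section WeightedSup

variable {v : ℝ → ℝ} {f : ℂ → ℂ}

lemma ae_norm_mul_le_wSup (hf : wSup v f < ⊤) :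
    ∀ᵐ ζ ∂volume.restrict unitDisc, ‖f ζ‖ * v ‖ζ‖ ≤ (wSup v f).toReal := by
  filter_upwards [ENNReal.ae_le_essSup (μ := volume.restrict unitDisc)
    fun ζ ↦ ENNReal.ofReal (‖f ζ‖ * v ‖ζ‖)] with ζ hζ
  exact (ENNReal.ofReal_le_iff_le_toReal hf.ne).1 hζ

lemma wSup_le_one (hf : ∀ ζ ∈ unitDisc, ‖f ζ‖ * v ‖ζ‖ ≤ 1) : wSup v f ≤ 1 :=
  essSup_le_of_ae_le _ <| ae_restrict_of_forall_mem measurableSet_unitDisc fun ζ hζ ↦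
    ENNReal.ofReal_le_one.2 (hf ζ hζ)

end WeightedSup

section Duality

variable {ω v : ℝ → ℝ} {f : ℂ → ℂ} {z : ℂ}

/-- The integral `∫_𝔻 |(B^ω_ζ)'(z)| ω(ζ)/v(ζ)` with respect to Lebesgue measure, which is `π`
times the norm of the functional `f ↦ (P_ω f)'(z)` on `L^∞_v`. -/
def derivKernelMass (ω v : ℝ → ℝ) (z : ℂ) : ℝ≥0∞ :=
  ∫⁻ ζ in unitDisc, ENNReal.ofReal (‖bKerD ω ζ z‖ * (ω ‖ζ‖ / v ‖ζ‖))

/-- The function `ζ ↦ conj ((B^ω_ζ)'(z)) / (|(B^ω_ζ)'(z)| v(ζ))`, an element of the unit ball of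
`L^∞_v` at which the functional `f ↦ (P_ω f)'(z)` attains its norm. It takes the value `0` where
`(B^ω_ζ)'(z)` vanishes. -/
def derivExtremal (ω v : ℝ → ℝ) (z ζ : ℂ) : ℂ :=
  conj (bKerD ω ζ z) / ‖bKerD ω ζ z‖ * ((v ‖ζ‖)⁻¹ : ℝ)

lemma continuousOn_inv_comp_norm (hv : ContinuousOn v (Ico 0 1)) (hpos : ∀ r ∈ Ico 0 1, 0 < v r) :
    ContinuousOn (fun ζ : ℂ ↦ (v ‖ζ‖)⁻¹) unitDisc :=
  (hv.comp continuous_norm.continuousOn fun _ ↦ norm_mem_Ico_of_mem_unitDisc).inv₀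
    fun _ hζ ↦ (hpos _ (norm_mem_Ico_of_mem_unitDisc hζ)).ne'

lemma integrableOn_mul_weight (hω : IsRadialWeight ω) (hpos : ∀ r ∈ Ico 0 1, 0 < v r)
    (hg : IntegrableOn (fun ζ : ℂ ↦ ω ‖ζ‖ / v ‖ζ‖) unitDisc)
    (hfm : AEStronglyMeasurable f (volume.restrict unitDisc)) (hf : wSup v f < ⊤) :
    IntegrableOn (fun ζ ↦ f ζ * ω ‖ζ‖) unitDisc := by
  have hωm := (integrableOn_comp_norm_unitDisc hω.2.1).aestronglyMeasurable
  refine Integrable.mono' (hg.const_mul (wSup v f).toReal)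
    (hfm.mul (continuous_ofReal.comp_aestronglyMeasurable hωm)) ?_
  filter_upwards [ae_norm_mul_le_wSup hf, ae_restrict_mem measurableSet_unitDisc] with ζ hle hζ
  have hωζ := hω.nonneg_norm hζ
  have hvζ := hpos _ (norm_mem_Ico_of_mem_unitDisc hζ)
  calc ‖f ζ * ω ‖ζ‖‖ = ‖f ζ‖ * v ‖ζ‖ * (ω ‖ζ‖ / v ‖ζ‖) := by
        rw [norm_mul, norm_real, Real.norm_of_nonneg hωζ]
        field_simp
    _ ≤ (wSup v f).toReal * (ω ‖ζ‖ / v ‖ζ‖) := by gcongr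

lemma ofReal_pi_mul_enorm_deriv_bProj_le (hω : IsRadialWeight ω)
    (hpos : ∀ r ∈ Ico 0 1, 0 < v r)
    (hg : IntegrableOn (fun ζ : ℂ ↦ ω ‖ζ‖ / v ‖ζ‖) unitDisc)
    (hfm : AEStronglyMeasurable f (volume.restrict unitDisc)) (hf : wSup v f < ⊤)
    (hz : z ∈ unitDisc) :
    ENNReal.ofReal Real.pi * ‖deriv (bProj ω f) z‖ₑ ≤ wSup v f * derivKernelMass ω v z := by
  rw [hω.ofReal_pi_mul_enorm_deriv_bProj (integrableOn_mul_weight hω hpos hg hfm hf) hz,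
    derivKernelMass, ← lintegral_const_mul' _ _ hf.ne]
  refine (enorm_integral_le_lintegral_enorm _).trans (lintegral_mono_ae ?_)
  filter_upwards [ENNReal.ae_le_essSup (μ := volume.restrict unitDisc)
    fun ζ ↦ ENNReal.ofReal (‖f ζ‖ * v ‖ζ‖), ae_restrict_mem measurableSet_unitDisc] with ζ hle hζ
  have hωζ := hω.nonneg_norm hζ
  have hvζ := hpos _ (norm_mem_Ico_of_mem_unitDisc hζ)
  calc ‖bKerD ω ζ z * (f ζ * ω ‖ζ‖)‖ₑ
      = ENNReal.ofReal (‖f ζ‖ * v ‖ζ‖ * (‖bKerD ω ζ z‖ * (ω ‖ζ‖ / v ‖ζ‖))) := by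
        rw [← ofReal_norm, norm_mul, norm_mul, norm_real, Real.norm_of_nonneg hωζ]
        congr 1
        field_simp
    _ = ENNReal.ofReal (‖f ζ‖ * v ‖ζ‖) * ENNReal.ofReal (‖bKerD ω ζ z‖ * (ω ‖ζ‖ / v ‖ζ‖)) :=
        ENNReal.ofReal_mul (by positivity)
    _ ≤ wSup v f * ENNReal.ofReal (‖bKerD ω ζ z‖ * (ω ‖ζ‖ / v ‖ζ‖)) := by
        gcongr
        exact hle

lemma aestronglyMeasurable_derivExtremal (hω : IsRadialWeight ω) (hv : ContinuousOn v (Ico 0 1))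
    (hpos : ∀ r ∈ Ico 0 1, 0 < v r) (hz : z ∈ unitDisc) :
    AEStronglyMeasurable (derivExtremal ω v z) (volume.restrict unitDisc) := by
  have hD : AEMeasurable (fun ζ ↦ bKerD ω ζ z) (volume.restrict unitDisc) :=
    (hω.continuousOn_bKerD hz).aemeasurable measurableSet_unitDisc
  have hv' : AEMeasurable (fun ζ : ℂ ↦ (v ‖ζ‖)⁻¹) (volume.restrict unitDisc) :=
    (continuousOn_inv_comp_norm hv hpos).aemeasurable measurableSet_unitDisc
  exact (((continuous_conj.measurable.comp_aemeasurable hD).div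
    (measurable_ofReal.comp_aemeasurable hD.norm)).mul
    (measurable_ofReal.comp_aemeasurable hv')).aestronglyMeasurable

lemma wSup_derivExtremal_le_one (hpos : ∀ r ∈ Ico 0 1, 0 < v r) :
    wSup v (derivExtremal ω v z) ≤ 1 := by
  refine wSup_le_one fun ζ hζ ↦ ?_
  have hvζ := hpos _ (norm_mem_Ico_of_mem_unitDisc hζ)
  rw [derivExtremal, norm_mul, norm_div, norm_conj, norm_real, norm_real, norm_norm, norm_inv,
    Real.norm_of_nonneg hvζ.le, inv_mul_cancel_right₀ hvζ.ne']
  exact div_self_le_one _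

lemma bKerD_mul_derivExtremal_mul (ω v : ℝ → ℝ) (z ζ : ℂ) :
    bKerD ω ζ z * (derivExtremal ω v z ζ * ω ‖ζ‖) =
      ((‖bKerD ω ζ z‖ * (ω ‖ζ‖ / v ‖ζ‖) : ℝ) : ℂ) := by
  have hnorm : bKerD ω ζ z * (conj (bKerD ω ζ z) / ‖bKerD ω ζ z‖) = ‖bKerD ω ζ z‖ := by
    rw [mul_div_assoc', mul_conj', sq, mul_self_div_self]
  rw [derivExtremal]
  linear_combination (norm := (push_cast; ring)) ((v ‖ζ‖)⁻¹ * ω ‖ζ‖ : ℂ) * hnorm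

lemma ofReal_pi_mul_enorm_deriv_bProj_derivExtremal (hω : IsRadialWeight ω)
    (hv : ContinuousOn v (Ico 0 1)) (hpos : ∀ r ∈ Ico 0 1, 0 < v r)
    (hg : IntegrableOn (fun ζ : ℂ ↦ ω ‖ζ‖ / v ‖ζ‖) unitDisc) (hz : z ∈ unitDisc) :
    ENNReal.ofReal Real.pi * ‖deriv (bProj ω (derivExtremal ω v z)) z‖ₑ =
      derivKernelMass ω v z := by
  have hf := integrableOn_mul_weight hω hpos hg (aestronglyMeasurable_derivExtremal hω hv hpos hz)
    ((wSup_derivExtremal_le_one hpos).trans_lt ENNReal.one_lt_top)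
  have hnonneg : ∀ ζ ∈ unitDisc, 0 ≤ ‖bKerD ω ζ z‖ * (ω ‖ζ‖ / v ‖ζ‖) := fun ζ hζ ↦
    mul_nonneg (norm_nonneg _)
      (div_nonneg (hω.nonneg_norm hζ) (hpos _ (norm_mem_Ico_of_mem_unitDisc hζ)).le)
  have hint : IntegrableOn (fun ζ ↦ ‖bKerD ω ζ z‖ * (ω ‖ζ‖ / v ‖ζ‖)) unitDisc := by
    simpa only [IntegrableOn, bKerD_mul_derivExtremal_mul, RCLike.re_to_complex, ofReal_re] using
      (hω.integrableOn_bKerD_mul hf hz).re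
  rw [hω.ofReal_pi_mul_enorm_deriv_bProj hf hz, derivKernelMass,
    ← ofReal_integral_eq_lintegral_ofReal hint
      (ae_restrict_of_forall_mem measurableSet_unitDisc hnonneg)]
  simp_rw [bKerD_mul_derivExtremal_mul]
  rw [integral_complex_ofReal,
    complex_enorm_ofReal (setIntegral_nonneg measurableSet_unitDisc hnonneg)]

end Duality

section Integrability

variable {ω v : ℝ → ℝ}

lemma integrableOn_div_of_projBddB (hω : IsRadialWeight ω) (hv : ContinuousOn v (Ico 0 1))
    (hpos : ∀ r ∈ Ico 0 1, 0 < v r) (h : ProjBddB ω v) :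
    IntegrableOn (fun ζ : ℂ ↦ ω ‖ζ‖ / v ‖ζ‖) unitDisc := by
  obtain ⟨C, -, hC⟩ := h
  let f : ℂ → ℂ := fun ζ ↦ ((v ‖ζ‖)⁻¹ : ℝ)
  have hfm : AEStronglyMeasurable f (volume.restrict unitDisc) :=
    (continuous_ofReal.comp_continuousOn
      (continuousOn_inv_comp_norm hv hpos)).aestronglyMeasurable measurableSet_unitDisc
  have hf : wSup v f ≤ 1 := wSup_le_one fun ζ hζ ↦ by
    have hvζ := hpos _ (norm_mem_Ico_of_mem_unitDisc hζ)
    rw [norm_real, norm_inv, Real.norm_of_nonneg hvζ.le, inv_mul_cancel₀ hvζ.ne']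
  have hint := (hC f hfm (hf.trans_lt ENNReal.one_lt_top)).1 0 zero_mem_unitDisc
  have hmom : mom ω 1 ≠ 0 := (hω.mom_pos zero_le_one).ne'
  refine IntegrableOn.congr_fun (hint.re.const_mul (2 * mom ω 1)) (fun ζ _ ↦ ?_)
    measurableSet_unitDisc
  have hbInt : bInt ω f 0 ζ = (((v ‖ζ‖)⁻¹ * (2 * mom ω 1)⁻¹ * ω ‖ζ‖ : ℝ) : ℂ) := by
    rw [bInt, bKer_zero, ← ofReal_inv, conj_ofReal, ofReal_mul, ofReal_mul]
  simp only [hbInt, RCLike.re_to_complex, ofReal_re]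
  field_simp

lemma integrableOn_div_closedBall (hω : IsRadialWeight ω) (hv : ContinuousOn v (Ico 0 1))
    (hpos : ∀ r ∈ Ico 0 1, 0 < v r) {r : ℝ} (hr : r < 1) :
    IntegrableOn (fun ζ : ℂ ↦ ω ‖ζ‖ / v ‖ζ‖) (Metric.closedBall 0 r) := by
  have hsub : Metric.closedBall (0 : ℂ) r ⊆ unitDisc := Metric.closedBall_subset_ball hr
  simpa only [div_eq_mul_inv] using
    ((integrableOn_comp_norm_unitDisc hω.2.1).mono_set hsub).mul_continuousOn
      ((continuousOn_inv_comp_norm hv hpos).mono hsub) (isCompact_closedBall 0 r)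

lemma integrableOn_norm_mul_div_of_derivKernelMass_zero_ne_top (hω : IsRadialWeight ω)
    (hv : ContinuousOn v (Ico 0 1)) (hpos : ∀ r ∈ Ico 0 1, 0 < v r)
    (h : derivKernelMass ω v 0 ≠ ⊤) :
    IntegrableOn (fun ζ : ℂ ↦ ‖ζ‖ * (ω ‖ζ‖ / v ‖ζ‖)) unitDisc := by
  have hmom : 0 < mom ω 3 := hω.mom_pos (by norm_num)
  have hkernel (ζ : ℂ) : ‖bKerD ω ζ 0‖ = ‖ζ‖ / (2 * mom ω 3) := by
    rw [bKerD_zero, norm_div, norm_conj, Complex.norm_of_nonneg (by positivity)]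
  have hmeas : AEStronglyMeasurable (fun ζ : ℂ ↦ ‖ζ‖ / (2 * mom ω 3) * (ω ‖ζ‖ / v ‖ζ‖))
      (volume.restrict unitDisc) := by
    have hinv := (continuousOn_inv_comp_norm hv hpos).aestronglyMeasurable (μ := volume)
      measurableSet_unitDisc
    exact (continuous_norm.div_const _).aestronglyMeasurable.mul
      ((integrableOn_comp_norm_unitDisc hω.2.1).aestronglyMeasurable.mul hinv)
  simp_rw [derivKernelMass, hkernel] at h
  have hint := (lintegral_ofReal_ne_top_iff_integrable hmeas
    (ae_restrict_of_forall_mem measurableSet_unitDisc fun ζ hζ ↦ ?_)).1 h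
  · refine (hint.const_mul (2 * mom ω 3)).congr (.of_forall fun ζ ↦ ?_)
    field_simp
  · have hωζ := hω.nonneg_norm hζ
    have hvζ := hpos _ (norm_mem_Ico_of_mem_unitDisc hζ)
    positivity

lemma integrableOn_div_of_derivKernelMass_zero_ne_top (hω : IsRadialWeight ω)
    (hv : ContinuousOn v (Ico 0 1)) (hpos : ∀ r ∈ Ico 0 1, 0 < v r)
    (h : derivKernelMass ω v 0 ≠ ⊤) :
    IntegrableOn (fun ζ : ℂ ↦ ω ‖ζ‖ / v ‖ζ‖) unitDisc :=
  integrableOn_of_integrableOn_norm_mul measurableSet_unitDisc one_half_pos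
    (integrableOn_div_closedBall hω hv hpos one_half_lt_one)
    (integrableOn_norm_mul_div_of_derivKernelMass_zero_ne_top hω hv hpos h)

end Integrability

section Characterization

variable {ω v : ℝ → ℝ} {C : ℝ}

lemma exists_derivKernelMass_le_of_projBddB (hω : IsRadialWeight ω)
    (hv : ContinuousOn v (Ico 0 1)) (hpos : ∀ r ∈ Ico 0 1, 0 < v r) (h : ProjBddB ω v) :
    ∃ C : ℝ, ∀ z ∈ unitDisc,
      ENNReal.ofReal ((1 - ‖z‖) * v ‖z‖) * derivKernelMass ω v z ≤ ENNReal.ofReal C := by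
  have hg := integrableOn_div_of_projBddB hω hv hpos h
  obtain ⟨C, -, hC⟩ := h
  refine ⟨Real.pi * C, fun z hz ↦ ?_⟩
  set f := derivExtremal ω v z
  have hfm : AEStronglyMeasurable f (volume.restrict unitDisc) :=
    aestronglyMeasurable_derivExtremal hω hv hpos hz
  have hf : wSup v f ≤ 1 := wSup_derivExtremal_le_one hpos
  have hbound := (hC f hfm (hf.trans_lt ENNReal.one_lt_top)).2.2 z hz
  rw [ENNReal.ofReal_mul' (norm_nonneg _), ofReal_norm] at hbound
  calc ENNReal.ofReal ((1 - ‖z‖) * v ‖z‖) * derivKernelMass ω v z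
      = ENNReal.ofReal Real.pi *
          (ENNReal.ofReal ((1 - ‖z‖) * v ‖z‖) * ‖deriv (bProj ω f) z‖ₑ) := by
        rw [← ofReal_pi_mul_enorm_deriv_bProj_derivExtremal hω hv hpos hg hz, mul_left_comm]
    _ ≤ ENNReal.ofReal Real.pi * (ENNReal.ofReal C * wSup v f) := by gcongr
    _ ≤ ENNReal.ofReal Real.pi * (ENNReal.ofReal C * 1) := by gcongr
    _ = ENNReal.ofReal (Real.pi * C) := by rw [mul_one, ENNReal.ofReal_mul Real.pi_pos.le]

lemma derivKernelMass_zero_ne_top (hpos : ∀ r ∈ Ico 0 1, 0 < v r)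
    (hC : ∀ z ∈ unitDisc,
      ENNReal.ofReal ((1 - ‖z‖) * v ‖z‖) * derivKernelMass ω v z ≤ ENNReal.ofReal C) :
    derivKernelMass ω v 0 ≠ ⊤ := by
  refine (ENNReal.lt_top_of_mul_ne_top_right
    ((hC 0 zero_mem_unitDisc).trans_lt ENNReal.ofReal_lt_top).ne ?_).ne
  simpa using hpos 0 (by simp)

lemma projBddB_of_derivKernelMass_le (hω : IsRadialWeight ω) (hv : ContinuousOn v (Ico 0 1))
    (hpos : ∀ r ∈ Ico 0 1, 0 < v r)
    (hC : ∀ z ∈ unitDisc,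
      ENNReal.ofReal ((1 - ‖z‖) * v ‖z‖) * derivKernelMass ω v z ≤ ENNReal.ofReal C) :
    ProjBddB ω v := by
  have hg := integrableOn_div_of_derivKernelMass_zero_ne_top hω hv hpos
    (derivKernelMass_zero_ne_top hpos hC)
  refine ⟨max C 1, lt_max_of_lt_right one_pos, fun f hfm hf ↦ ?_⟩
  have hfω := integrableOn_mul_weight hω hpos hg hfm hf
  refine ⟨fun z hz ↦ hω.integrableOn_bInt hfω hz, fun z hz ↦
    (hω.hasDerivAt_bProj hfω hz).differentiableAt.differentiableWithinAt, fun z hz ↦ ?_⟩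
  have hpi : 1 ≤ ENNReal.ofReal Real.pi := ENNReal.one_le_ofReal.2 (by linarith [Real.pi_gt_three])
  calc ENNReal.ofReal ((1 - ‖z‖) * v ‖z‖ * ‖deriv (bProj ω f) z‖)
      = ENNReal.ofReal ((1 - ‖z‖) * v ‖z‖) * ‖deriv (bProj ω f) z‖ₑ := by
        rw [ENNReal.ofReal_mul' (norm_nonneg _), ofReal_norm]
    _ ≤ ENNReal.ofReal ((1 - ‖z‖) * v ‖z‖) *
          (ENNReal.ofReal Real.pi * ‖deriv (bProj ω f) z‖ₑ) := by
        gcongr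
        exact le_mul_of_one_le_left' hpi
    _ ≤ ENNReal.ofReal ((1 - ‖z‖) * v ‖z‖) * (wSup v f * derivKernelMass ω v z) := by
        gcongr ENNReal.ofReal ((1 - ‖z‖) * v ‖z‖) * ?_
        exact ofReal_pi_mul_enorm_deriv_bProj_le hω hpos hg hfm hf hz
    _ = ENNReal.ofReal ((1 - ‖z‖) * v ‖z‖) * derivKernelMass ω v z * wSup v f := by ring
    _ ≤ ENNReal.ofReal (max C 1) * wSup v f := by
        gcongr
        exact (hC z hz).trans (ENNReal.ofReal_le_ofReal (le_max_left C 1))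

end Characterization

theorem stmt17_general {ω v : ℝ → ℝ} (hω : IsRadialWeight ω) (hv : ContinuousOn v (Ico 0 1))
    (hpos : ∀ r ∈ Ico 0 1, 0 < v r) :
    ProjBddB ω v ↔ ∃ C : ℝ, ∀ z ∈ unitDisc,
      ENNReal.ofReal ((1 - ‖z‖) * v ‖z‖) * derivKernelMass ω v z ≤ ENNReal.ofReal C :=
  ⟨exists_derivKernelMass_le_of_projBddB hω hv hpos,
    fun ⟨_, hC⟩ ↦ projBddB_of_derivKernelMass_le hω hv hpos hC⟩

/-- Proposition: `P_ω : L^∞_ν̂ → B^∞_ν̂` is bounded iff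
`sup_{z∈𝔻} (1-|z|) ν̂(z) ∫_𝔻 |(B^ω_ζ)'(z)| ω(ζ)/ν̂(ζ) dA(ζ) < ∞`. -/
theorem stmt17 (ω ν : ℝ → ℝ) (hω : IsRadialWeight ω) (hν : IsRadialWeight ν) :
    ProjBddB ω (tl ν) ↔
      ∃ C : ℝ, ∀ z ∈ unitDisc,
        ENNReal.ofReal ((1 - ‖z‖) * tl ν ‖z‖) *
          ∫⁻ ζ in unitDisc,
            ENNReal.ofReal (‖bKerD ω ζ z‖ * (ω ‖ζ‖ / tl ν ‖ζ‖)) ≤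
        ENNReal.ofReal C :=
  stmt17_general hω (hν.continuousOn_tl.mono Ico_subset_Icc_self) hν.2.2
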